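/- Let L ∈ ℕ and let F : ℝ → ℝ be a C² function and −∞ = p₀ < p₁ < ⋯ < p_{2L+1} < p_{2L+2} = +∞ be such that: F(p) → +∞ as |p| → ∞; F'(p_i) = 0 and F''(p_i) ≠ 0 for 1 ≤ i ≤ 2L+1; F' > 0 on each interval (p_{2i+1}, p_{2i+2}) for 0 ≤ i ≤ L; and F' < 0 on each interval (p_{2i}, p_{2i+1}) for 0 ≤ i ≤ L. Set m = min_{1 ≤ i ≤ 2L} |F(p_i) − F(p_{i+1})|. Let V : ℝ → ℝ be continuous and 1-periodic with max V − min V < m, and set H(x,p) = F(p) − V(x). Fix P ∈ ℝ, let H̄(P) ∈ ℝ be a constant such that F(P + u'(x)) − V(x) = H̄(P) admits a continuous 1-periodic viscosity solution on 𝕋, and for each ε > 0 let u^ε be the continuous 1-periodic viscosity solution of ε u^ε(x) + F(P + (u^ε)'(x)) − V(x) = 0 on 𝕋. Then there exists a continuous 1-periodic viscosity solution u⁰ of F(P + (u⁰)'(x)) − V(x) = H̄(P) on 𝕋 such that u^ε + H̄(P)/ε converges uniformly to u⁰ as ε → 0⁺. -/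

import Mathlib

open Filter Set
open scoped Topology

noncomputable section

/-- Viscosity subsolution of `E(x, u(x), u'(x)) = 0` on `ℝ`. -/
def ViscSub1 (E : ℝ → ℝ → ℝ → ℝ) (u : ℝ → ℝ) : Prop :=
  ∀ φ : ℝ → ℝ, ContDiff ℝ 1 φ → ∀ x₀ : ℝ, IsLocalMax (u - φ) x₀ →
    E x₀ (u x₀) (deriv φ x₀) ≤ 0

/-- Viscosity supersolution of `E(x, u(x), u'(x)) = 0` on `ℝ`. -/
def ViscSuper1 (E : ℝ → ℝ → ℝ → ℝ) (u : ℝ → ℝ) : Prop :=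
  ∀ φ : ℝ → ℝ, ContDiff ℝ 1 φ → ∀ x₀ : ℝ, IsLocalMin (u - φ) x₀ →
    0 ≤ E x₀ (u x₀) (deriv φ x₀)

/-- Viscosity solution of `E(x, u(x), u'(x)) = 0` on `ℝ`. -/
def ViscSol1 (E : ℝ → ℝ → ℝ → ℝ) (u : ℝ → ℝ) : Prop :=
  ViscSub1 E u ∧ ViscSuper1 E u

/-- `t` is the slope of a `C¹` function touching `u` from above at `x`. -/
def TA (u : ℝ → ℝ) (x t : ℝ) : Prop :=
  ∃ φ : ℝ → ℝ, ContDiff ℝ 1 φ ∧ IsLocalMax (u - φ) x ∧ deriv φ x = t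

/-- `t` is the slope of a `C¹` function touching `u` from below at `x`. -/
def TB (u : ℝ → ℝ) (x t : ℝ) : Prop :=
  ∃ φ : ℝ → ℝ, ContDiff ℝ 1 φ ∧ IsLocalMin (u - φ) x ∧ deriv φ x = t

lemma TA.neg {u : ℝ → ℝ} {x t : ℝ} (h : TA (fun y => - u y) x t) : TB u x (-t) := by
  obtain ⟨φ, h1, h2, h3⟩ := h
  refine ⟨fun y => - φ y, h1.neg, ?_, by simp [h3]⟩
  filter_upwards [h2] with y hy
  simp only [Pi.sub_apply] at hy ⊢
  linarith

lemma TB.neg {u : ℝ → ℝ} {x t : ℝ} (h : TB (fun y => - u y) x t) : TA u x (-t) := by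
  obtain ⟨φ, h1, h2, h3⟩ := h
  refine ⟨fun y => - φ y, h1.neg, ?_, by simp [h3]⟩
  filter_upwards [h2] with y hy
  simp only [Pi.sub_apply] at hy ⊢
  linarith

lemma TB.to_neg {u : ℝ → ℝ} {x t : ℝ} (h : TB u x t) : TA (fun y => - u y) x (-t) := by
  apply TB.neg
  simpa using h

lemma TA.to_neg {u : ℝ → ℝ} {x t : ℝ} (h : TA u x t) : TB (fun y => - u y) x (-t) := by
  apply TA.neg
  simpa using h

lemma TA.add_const {u : ℝ → ℝ} {x t : ℝ} (c : ℝ) (h : TA (fun y => u y + c) x t) : TA u x t := by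
  obtain ⟨φ, h1, h2, h3⟩ := h
  refine ⟨φ, h1, ?_, h3⟩
  filter_upwards [h2] with y hy
  simp only [Pi.sub_apply] at hy ⊢
  linarith

lemma TB.add_const {u : ℝ → ℝ} {x t : ℝ} (c : ℝ) (h : TB (fun y => u y + c) x t) : TB u x t := by
  obtain ⟨φ, h1, h2, h3⟩ := h
  refine ⟨φ, h1, ?_, h3⟩
  filter_upwards [h2] with y hy
  simp only [Pi.sub_apply] at hy ⊢
  linarith

lemma TA.scale {u : ℝ → ℝ} {x t θ : ℝ} (hθ : 0 < θ) (h : TA (fun y => θ * u y) x t) :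
    TA u x (t / θ) := by
  obtain ⟨φ, h1, h2, h3⟩ := h
  refine ⟨fun y => φ y / θ, h1.div_const θ, ?_, by simp [h3]⟩
  filter_upwards [h2] with y hy
  simp only [Pi.sub_apply] at hy ⊢
  have e : ∀ z, u z - φ z / θ = (θ * u z - φ z) / θ := fun z => by field_simp
  rw [e, e]
  gcongr

lemma TA.zero {x t : ℝ} (h : TA (fun _ => 0) x t) : t = 0 := by
  obtain ⟨φ, h1, h2, h3⟩ := h
  have h4 := h2.deriv_eq_zero
  have : ((fun _ => (0:ℝ)) - φ) = fun y => - φ y := by ext y; simp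
  rw [this, deriv.fun_neg] at h4
  linarith

lemma exists_localMax {g : ℝ → ℝ} (hg : Continuous g) {l m r : ℝ} (h1 : l < m) (h2 : m < r)
    (h3 : g l < g m) (h4 : g r < g m) : ∃ x ∈ Ioo l r, IsLocalMax g x := by
  obtain ⟨x, hx, hmax⟩ := (isCompact_Icc (a := l) (b := r)).exists_isMaxOn
    ⟨m, h1.le, h2.le⟩ hg.continuousOn
  have hm : g m ≤ g x := hmax ⟨h1.le, h2.le⟩
  have hl : l < x := lt_of_le_of_ne hx.1 (by rintro rfl; linarith)
  have hr : x < r := lt_of_le_of_ne hx.2 (by rintro rfl; linarith)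
  exact ⟨x, ⟨hl, hr⟩, hmax.isLocalMax (Icc_mem_nhds hl hr)⟩

lemma exists_localMin {g : ℝ → ℝ} (hg : Continuous g) {l m r : ℝ} (h1 : l < m) (h2 : m < r)
    (h3 : g m < g l) (h4 : g m < g r) : ∃ x ∈ Ioo l r, IsLocalMin g x := by
  obtain ⟨x, hx, hmax⟩ := (isCompact_Icc (a := l) (b := r)).exists_isMinOn
    ⟨m, h1.le, h2.le⟩ hg.continuousOn
  have hm : g x ≤ g m := hmax ⟨h1.le, h2.le⟩
  have hl : l < x := lt_of_le_of_ne hx.1 (by rintro rfl; linarith)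
  have hr : x < r := lt_of_le_of_ne hx.2 (by rintro rfl; linarith)
  exact ⟨x, ⟨hl, hr⟩, hmax.isLocalMin (Icc_mem_nhds hl hr)⟩

lemma contDiff_lin (κ : ℝ) : ContDiff ℝ 1 (fun x : ℝ => κ * x) := by fun_prop

lemma deriv_lin (κ x : ℝ) : deriv (fun x : ℝ => κ * x) x = κ := by
  simp

/-- Localization of slopes: nothing crosses a level outside the range of `f`. -/
lemma localize {F f u : ℝ → ℝ} {P : ℝ} (hu : Continuous u) (hper : Function.Periodic u 1)
    (hA : ∀ x t, TA u x t → F (P + t) ≤ f x) (hB : ∀ x t, TB u x t → f x ≤ F (P + t))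
    (q : ℝ) (hq : (∀ x, f x < F q) ∨ (∀ x, F q < f x)) :
    (P < q → ∀ x y, x ≤ y → u y - u x ≤ (q - P) * (y - x)) ∧
    (q < P → ∀ x y, x ≤ y → (q - P) * (y - x) ≤ u y - u x) ∧ q ≠ P := by
  set κ := q - P with hκ
  have hPq : P + κ = q := by rw [hκ]; ring
  have hg : Continuous (u - fun x => κ * x) := by
    have : Continuous (fun x : ℝ => κ * x) := by fun_prop
    exact hu.sub this
  have key : (∀ x, ¬ IsLocalMax (u - fun x => κ * x) x) ∨
      (∀ x, ¬ IsLocalMin (u - fun x => κ * x) x) := by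
    rcases hq with h | h
    · left
      intro x hx
      have := hA x κ ⟨_, contDiff_lin κ, hx, deriv_lin κ x⟩
      rw [hPq] at this
      linarith [h x]
    · right
      intro x hx
      have := hB x κ ⟨_, contDiff_lin κ, hx, deriv_lin κ x⟩
      rw [hPq] at this
      linarith [h x]
  have hp1 : ∀ x, u (x + 1) = u x := hper
  have hp2 : ∀ x, u (x - 1) = u x := fun x => by rw [← hp1 (x - 1)]; simp
  refine ⟨?_, ?_, ?_⟩
  · intro hlt x y hxy
    by_contra hcon
    push Not at hcon
    have hxy' : x < y := lt_of_le_of_ne hxy (by rintro rfl; simp at hcon)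
    rcases key with h | h
    · obtain ⟨z, -, hz⟩ := exists_localMax hg hxy' (show y < y + 1 by linarith)
        (by simp only [Pi.sub_apply]; linarith) (by simp only [Pi.sub_apply, hp1]; linarith)
      exact h z hz
    · obtain ⟨z, -, hz⟩ := exists_localMin hg (show x - 1 < x by linarith) hxy' 
        (by simp only [Pi.sub_apply, hp2]; linarith) (by simp only [Pi.sub_apply]; linarith)
      exact h z hz
  · intro hlt x y hxy
    by_contra hcon
    push Not at hcon
    have hxy' : x < y := lt_of_le_of_ne hxy (by rintro rfl; simp at hcon)
    rcases key with h | h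
    · obtain ⟨z, -, hz⟩ := exists_localMax hg (show x - 1 < x by linarith) hxy' 
        (by simp only [Pi.sub_apply, hp2]; linarith) (by simp only [Pi.sub_apply]; linarith)
      exact h z hz
    · obtain ⟨z, -, hz⟩ := exists_localMin hg hxy' (show y < y + 1 by linarith)
        (by simp only [Pi.sub_apply]; linarith) (by simp only [Pi.sub_apply, hp1]; linarith)
      exact h z hz
  · intro hqP
    have hκ0 : κ = 0 := by rw [hκ, hqP]; ring
    have hex : ∀ x : ℝ, ∃ y ∈ Icc (0:ℝ) 1, u x = u y := by
      intro x
      obtain ⟨y, hy, h⟩ := hper.exists_mem_Ico₀ one_pos x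
      exact ⟨y, ⟨hy.1, hy.2.le⟩, h⟩
    rcases key with h | h
    · obtain ⟨x, hx, hmax⟩ := (isCompact_Icc (a := (0:ℝ)) (b := 1)).exists_isMaxOn
        ⟨0, by simp⟩ hu.continuousOn
      refine h x (Eventually.of_forall fun y => ?_)
      obtain ⟨y', hy', e⟩ := hex y
      simp only [Pi.sub_apply, hκ0, e]
      have := hmax hy'
      simp only [mem_ofPred_eq] at this
      linarith
    · obtain ⟨x, hx, hmax⟩ := (isCompact_Icc (a := (0:ℝ)) (b := 1)).exists_isMinOn
        ⟨0, by simp⟩ hu.continuousOn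
      refine h x (Eventually.of_forall fun y => ?_)
      obtain ⟨y', hy', e⟩ := hex y
      simp only [Pi.sub_apply, hκ0, e]
      have := hmax hy'
      simp only [mem_ofPred_eq] at this
      linarith

lemma TA.slope_le {u : ℝ → ℝ} {x t k : ℝ} (h : TA u x t)
    (hk : ∀ x y, x ≤ y → u y - u x ≤ k * (y - x)) : t ≤ k := by
  obtain ⟨φ, h1, h2, h3⟩ := h
  have hd : HasDerivAt φ t x := h3 ▸ (h1.differentiable one_ne_zero x).hasDerivAt
  have hsub : Iio x ⊆ {x}ᶜ := fun y hy => ne_of_lt hy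
  have hs := (hasDerivAt_iff_tendsto_slope.1 hd).mono_left (nhdsWithin_mono x hsub)
  refine le_of_tendsto hs ?_
  filter_upwards [self_mem_nhdsWithin, nhdsWithin_le_nhds h2] with y hy hy2
  simp only [Pi.sub_apply] at hy2
  rw [slope_def_field, div_le_iff_of_neg (sub_neg.2 hy)]
  have := hk y x (le_of_lt hy)
  linarith

lemma TA.le_slope {u : ℝ → ℝ} {x t k : ℝ} (h : TA u x t)
    (hk : ∀ x y, x ≤ y → k * (y - x) ≤ u y - u x) : k ≤ t := by
  obtain ⟨φ, h1, h2, h3⟩ := h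
  have hd : HasDerivAt φ t x := h3 ▸ (h1.differentiable one_ne_zero x).hasDerivAt
  have hsub : Ioi x ⊆ {x}ᶜ := fun y hy => ne_of_gt hy
  have hs := (hasDerivAt_iff_tendsto_slope.1 hd).mono_left (nhdsWithin_mono x hsub)
  refine ge_of_tendsto hs ?_
  filter_upwards [self_mem_nhdsWithin, nhdsWithin_le_nhds h2] with y hy hy2
  simp only [Pi.sub_apply] at hy2
  rw [slope_def_field, le_div_iff₀ (sub_pos.2 hy)]
  have := hk x y (le_of_lt hy)
  linarith

lemma per_bdd {u : ℝ → ℝ} (hu : Continuous u) (hper : Function.Periodic u 1) :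
    ∃ M : ℝ, 0 ≤ M ∧ ∀ x, |u x| ≤ M := by
  obtain ⟨M, hM⟩ := (isCompact_Icc (a := (0:ℝ)) (b := 1)).exists_bound_of_continuousOn
    hu.continuousOn
  refine ⟨M, (norm_nonneg _).trans (hM 0 (by simp)), fun x => ?_⟩
  obtain ⟨y, hy, h⟩ := hper.exists_mem_Ico₀ one_pos x
  rw [h]
  exact hM y ⟨hy.1, hy.2.le⟩

lemma tripling {U1 U2 W : ℝ → ℝ} (h1 : Continuous U1) (h2 : Continuous U2) (h3 : Continuous W)
    (p1 : Function.Periodic U1 1) (p2 : Function.Periodic U2 1) (p3 : Function.Periodic W 1) :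
    ∃ x0 : ℝ, (∀ x, U1 x + U2 x - W x ≤ U1 x0 + U2 x0 - W x0) ∧
      ∃ X Y Z S T : ℕ → ℝ, Tendsto X atTop (𝓝 x0) ∧ Tendsto Y atTop (𝓝 x0) ∧
        Tendsto Z atTop (𝓝 x0) ∧ ∀ n, TA U1 (X n) (S n) ∧ TA U2 (Y n) (T n) ∧
          TB W (Z n) (S n + T n) := by
  obtain ⟨M1, -, hM1⟩ := per_bdd h1 p1
  obtain ⟨M2, -, hM2⟩ := per_bdd h2 p2
  obtain ⟨M3, -, hM3⟩ := per_bdd h3 p3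
  set M := M1 + M2 + M3 with hM
  have hMb : ∀ x y z, |U1 x + U2 y - W z| ≤ M := by
    intro x y z
    have a1 := abs_le.1 (hM1 x)
    have a2 := abs_le.1 (hM2 y)
    have a3 := abs_le.1 (hM3 z)
    rw [abs_le]; constructor <;> linarith
  have hM0 : 0 ≤ M := (abs_nonneg _).trans (hMb 0 0 0)
  set R := 2 + 2 * M with hR
  let Ψ : ℕ → ℝ × ℝ × ℝ → ℝ := fun n v => U1 v.1 + U2 v.2.1 - W v.2.2
    - (n + 1) * (v.1 - v.2.2) ^ 2 - (n + 1) * (v.2.1 - v.2.2) ^ 2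
  have hmax : ∀ n : ℕ, ∃ v : ℝ × ℝ × ℝ, v.2.2 ∈ Icc (0:ℝ) 1 ∧ ∀ v', Ψ n v' ≤ Ψ n v := by
    intro n
    have hc : Continuous (Ψ n) := by fun_prop
    obtain ⟨v, hv, hvmax⟩ := ((isCompact_Icc (a := -R) (b := R)).prod
      ((isCompact_Icc (a := -R) (b := R)).prod (isCompact_Icc (a := (0:ℝ)) (b := 1)))).exists_isMaxOn
      ⟨(0, 0, 0), by
        refine ⟨⟨?_, ?_⟩, ⟨?_, ?_⟩, ⟨?_, ?_⟩⟩ <;> simp <;> linarith⟩ hc.continuousOn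
    refine ⟨v, hv.2.2, ?_⟩
    have hmain : ∀ x y z : ℝ, z ∈ Icc (0:ℝ) 1 → Ψ n (x, y, z) ≤ Ψ n v := by
      intro x y z hz
      by_cases hx : x ∈ Icc (-R) R ∧ y ∈ Icc (-R) R
      · exact hvmax (a := (x, y, z)) ⟨hx.1, hx.2, hz⟩
      · have h0 : Ψ n (0, 0, 0) ≤ Ψ n v := hvmax (a := (0, 0, 0)) (by
          refine ⟨⟨?_, ?_⟩, ⟨?_, ?_⟩, ⟨?_, ?_⟩⟩ <;> simp <;> linarith)
        refine le_trans ?_ h0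
        have b1 := (abs_le.1 (hMb x y z)).2
        have b2 := (abs_le.1 (hMb 0 0 0)).1
        have hn : (0:ℝ) ≤ n := Nat.cast_nonneg n
        have big : ∀ s : ℝ, s ∉ Icc (-R) R → 2 * M ≤ (s - z) ^ 2 := by
          intro s hs
          have : s < -R ∨ R < s := by
            by_contra hcon
            push Not at hcon
            exact hs ⟨hcon.1, hcon.2⟩
          obtain ⟨hz1, hz2⟩ := hz
          rcases this with h | h <;> nlinarith
        have key : 2 * M ≤ (x - z) ^ 2 + (y - z) ^ 2 := by
          by_cases hx1 : x ∈ Icc (-R) R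
          · have := big y (fun h => hx ⟨hx1, h⟩)
            nlinarith [sq_nonneg (x - z)]
          · have := big x hx1
            nlinarith [sq_nonneg (y - z)]
        simp only [Ψ]
        nlinarith [sq_nonneg (x - z), sq_nonneg (y - z),
          mul_nonneg hn (add_nonneg (sq_nonneg (x - z)) (sq_nonneg (y - z)))]
    rintro ⟨x, y, z⟩
    have e : Ψ n (x, y, z) = Ψ n (x - ⌊z⌋, y - ⌊z⌋, z - ⌊z⌋) := by
      simp only [Ψ]
      rw [show U1 (x - ⌊z⌋) = U1 x by simpa using p1.sub_int_mul_eq ⌊z⌋ (x := x),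
        show U2 (y - ⌊z⌋) = U2 y by simpa using p2.sub_int_mul_eq ⌊z⌋ (x := y),
        show W (z - ⌊z⌋) = W z by simpa using p3.sub_int_mul_eq ⌊z⌋ (x := z)]
      ring
    rw [e]
    apply hmain
    constructor
    · linarith [Int.floor_le z]
    · linarith [Int.lt_floor_add_one z]
  choose v hv hvmax using hmax
  obtain ⟨x0, -, ψ, hψ, hlim⟩ := (isCompact_Icc (a := (0:ℝ)) (b := 1)).tendsto_subseq hv
  have hsq : ∀ n : ℕ, (n + 1) * ((v n).1 - (v n).2.2) ^ 2 ≤ 2 * M ∧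
      (n + 1) * ((v n).2.1 - (v n).2.2) ^ 2 ≤ 2 * M := by
    intro n
    have h0 := hvmax n (0, 0, 0)
    simp only [Ψ] at h0
    have b1 := (abs_le.1 (hMb (v n).1 (v n).2.1 (v n).2.2)).2
    have b2 := (abs_le.1 (hMb 0 0 0)).1
    have hn : (0:ℝ) ≤ n + 1 := by positivity
    have c1 := mul_nonneg hn (sq_nonneg ((v n).1 - (v n).2.2))
    have c2 := mul_nonneg hn (sq_nonneg ((v n).2.1 - (v n).2.2))
    constructor <;> nlinarith
  have hto : ∀ d : ℕ → ℝ, (∀ n : ℕ, (n + 1) * (d n) ^ 2 ≤ 2 * M) → Tendsto d atTop (𝓝 0) := by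
    intro d hd
    have h0 : Tendsto (fun n : ℕ => (2 * M) * (1 / ((n : ℝ) + 1))) atTop (𝓝 0) := by
      simpa using (tendsto_one_div_add_atTop_nhds_zero_nat (𝕜 := ℝ)).const_mul (2 * M)
    have h1 : Tendsto (fun n => (d n) ^ 2) atTop (𝓝 0) := by
      refine squeeze_zero (fun n => sq_nonneg _) (fun n => ?_) h0
      have : (0:ℝ) < n + 1 := by positivity
      rw [mul_one_div, le_div_iff₀ this]
      linarith [hd n]
    have h2 : Tendsto (fun n => |d n|) atTop (𝓝 0) := by
      have := (Real.continuous_sqrt.tendsto 0).comp h1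
      simpa [Function.comp_def, Real.sqrt_sq_eq_abs] using this
    exact (tendsto_zero_iff_abs_tendsto_zero d).2 h2
  have hX0 := hto _ (fun n => (hsq n).1)
  have hY0 := hto _ (fun n => (hsq n).2)
  have hX : Tendsto (fun n => (v (ψ n)).1) atTop (𝓝 x0) := by
    have := (hX0.comp hψ.tendsto_atTop).add hlim
    simpa [Function.comp_def] using this
  have hY : Tendsto (fun n => (v (ψ n)).2.1) atTop (𝓝 x0) := by
    have := (hY0.comp hψ.tendsto_atTop).add hlim
    simpa [Function.comp_def] using this
  have hZ : Tendsto (fun n => (v (ψ n)).2.2) atTop (𝓝 x0) := hlim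
  refine ⟨x0, ?_, fun n => (v (ψ n)).1, fun n => (v (ψ n)).2.1, fun n => (v (ψ n)).2.2,
    fun n => 2 * ((ψ n : ℝ) + 1) * ((v (ψ n)).1 - (v (ψ n)).2.2),
    fun n => 2 * ((ψ n : ℝ) + 1) * ((v (ψ n)).2.1 - (v (ψ n)).2.2), hX, hY, hZ, ?_⟩
  · intro x
    have hl : Tendsto (fun n => U1 (v (ψ n)).1 + U2 (v (ψ n)).2.1 - W (v (ψ n)).2.2) atTop
        (𝓝 (U1 x0 + U2 x0 - W x0)) :=
      (((h1.tendsto x0).comp hX).add ((h2.tendsto x0).comp hY)).sub ((h3.tendsto x0).comp hZ)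
    refine ge_of_tendsto hl (Eventually.of_forall fun n => ?_)
    have h0 := hvmax (ψ n) (x, x, x)
    simp only [Ψ] at h0
    have hn : (0:ℝ) ≤ (ψ n : ℝ) + 1 := by positivity
    have c1 := mul_nonneg hn (sq_nonneg ((v (ψ n)).1 - (v (ψ n)).2.2))
    have c2 := mul_nonneg hn (sq_nonneg ((v (ψ n)).2.1 - (v (ψ n)).2.2))
    simp only [sub_self] at h0
    linarith
  · intro n
    beta_reduce
    generalize ψ n = m
    have hd : ∀ c x : ℝ, HasDerivAt (fun y : ℝ => ((m : ℝ) + 1) * (y - c) ^ 2)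
        (2 * ((m : ℝ) + 1) * (x - c)) x := by
      intro c x
      have := (((hasDerivAt_id x).sub_const c).pow 2).const_mul ((m : ℝ) + 1)
      refine this.congr_deriv ?_
      simp; ring
    refine ⟨⟨fun y => ((m : ℝ) + 1) * (y - (v m).2.2) ^ 2, by fun_prop, ?_, (hd _ _).deriv⟩,
      ⟨fun y => ((m : ℝ) + 1) * (y - (v m).2.2) ^ 2, by fun_prop, ?_, (hd _ _).deriv⟩,
      ⟨fun y => -(((m : ℝ) + 1) * (y - (v m).1) ^ 2) - ((m : ℝ) + 1) * (y - (v m).2.1) ^ 2,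
        by fun_prop, ?_, ?_⟩⟩
    · refine Eventually.of_forall fun y => ?_
      have := hvmax m (y, (v m).2.1, (v m).2.2)
      simp only [Ψ] at this
      simp only [Pi.sub_apply]
      linarith
    · refine Eventually.of_forall fun y => ?_
      have := hvmax m ((v m).1, y, (v m).2.2)
      simp only [Ψ] at this
      simp only [Pi.sub_apply]
      linarith
    · refine Eventually.of_forall fun y => ?_
      have := hvmax m ((v m).1, (v m).2.1, y)
      simp only [Ψ] at this
      simp only [Pi.sub_apply]
      nlinarith
    · have := ((hd (v m).1 (v m).2.2).neg.sub (hd (v m).2.1 (v m).2.2)).deriv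
      simp only [Pi.neg_def, Pi.sub_def] at this
      rw [this]; ring

lemma TA.stable {ι : Type*} {l : Filter ι} {W : ι → ℝ → ℝ} {u : ℝ → ℝ}
    (hW : ∀ᶠ i in l, Continuous (W i)) (hlim : TendstoUniformly W u l) {x t : ℝ} (h : TA u x t)
    {δ : ℝ} (hδ : 0 < δ) :
    ∀ᶠ i in l, ∃ y s, |y - x| < δ ∧ |s - t| < δ ∧ TA (W i) y s := by
  obtain ⟨φ, h1, h2, h3⟩ := h
  set χ : ℝ → ℝ := fun y => φ y + (y - x) ^ 2 with hχ
  have hχc : ContDiff ℝ 1 χ := by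
    have : ContDiff ℝ 1 (fun y : ℝ => (y - x) ^ 2) := by fun_prop
    exact h1.add this
  have hχd : deriv χ x = t := by
    have hd : HasDerivAt φ t x := h3 ▸ (h1.differentiable one_ne_zero x).hasDerivAt
    have hq := ((hasDerivAt_id x).sub_const x).pow 2
    have := hd.add hq
    have h' : HasDerivAt χ t x := by
      refine this.congr_deriv ?_
      simp
    exact h'.deriv
  have hdc : Continuous (deriv χ) := hχc.continuous_deriv le_rfl
  have e1 : ∀ᶠ y in 𝓝 x, |deriv χ y - t| < δ := by
    have := (hdc.tendsto x).eventually (Metric.ball_mem_nhds (deriv χ x) hδ)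
    filter_upwards [this] with y hy
    rw [hχd] at hy
    simpa [Real.dist_eq] using hy
  obtain ⟨r, hr, hball⟩ := Metric.eventually_nhds_iff.1 (e1.and h2)
  set ρ := min r δ / 2 with hρ
  have hρ0 : 0 < ρ := by positivity
  have hρr : ρ < r := by have := min_le_left r δ; rw [hρ]; linarith [lt_min hr hδ]
  have hρδ : ρ < δ := by have := min_le_right r δ; rw [hρ]; linarith [lt_min hr hδ]
  filter_upwards [hW, Metric.tendstoUniformly_iff.1 hlim (ρ ^ 2 / 4) (by positivity)] with i hi hi2
  have hcl : ∀ y, u y - ρ ^ 2 / 4 < W i y ∧ W i y < u y + ρ ^ 2 / 4 := by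
    intro y
    have := hi2 y
    rw [Real.dist_eq, abs_lt] at this
    constructor <;> linarith
  have hend : ∀ y, |y - x| = ρ → (W i - χ) y < (W i - χ) x := by
    intro y hy
    have := (hball (y := y) (by rw [Real.dist_eq, hy]; exact hρr)).2
    simp only [Pi.sub_apply] at this
    have hs : (y - x) ^ 2 = ρ ^ 2 := by rw [← hy, sq_abs]
    simp only [Pi.sub_apply, hχ, hs, sub_self]
    have := hcl y
    have := hcl x
    have : 0 < ρ ^ 2 := by positivity
    linarith
  obtain ⟨y, hy, hmax⟩ := exists_localMax (g := W i - χ) (hi.sub hχc.continuous)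
    (show x - ρ < x by linarith) (show x < x + ρ by linarith)
    (hend _ (by rw [show x - ρ - x = -ρ by ring, abs_neg, abs_of_pos hρ0]))
    (hend _ (by rw [show x + ρ - x = ρ by ring, abs_of_pos hρ0]))
  have hyx : |y - x| < ρ := by rw [abs_lt]; constructor <;> linarith [hy.1, hy.2]
  exact ⟨y, deriv χ y, hyx.trans hρδ, (hball (by rw [Real.dist_eq]; exact hyx.trans hρr)).1,
    χ, hχc, hmax, rfl⟩

lemma sub_stable {l : Filter ℝ} [l.NeBot] (hl : l ≤ 𝓝[>] 0) {F f : ℝ → ℝ} {P C : ℝ}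
    (hF : Continuous F) (hf : Continuous f)
    {W : ℝ → ℝ → ℝ} {u : ℝ → ℝ} (hW : ∀ ε > 0, Continuous (W ε))
    (hC : ∀ ε > 0, ∀ x, |W ε x| ≤ C) (hlim : TendstoUniformly W u l)
    (hsub : ∀ ε > 0, ∀ x t, TA (W ε) x t → ε * W ε x + F (P + t) ≤ f x) :
    ∀ x t, TA u x t → F (P + t) ≤ f x := by
  intro x t h
  by_contra hcon
  push Not at hcon
  set μ := (F (P + t) - f x) / 2 with hμ
  have hμ0 : 0 < μ := by rw [hμ]; linarith
  have hc : Continuous (fun v : ℝ × ℝ => F (P + v.2) - f v.1) := by fun_prop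
  have hev : ∀ᶠ v in 𝓝 (x, t), μ < F (P + v.2) - f v.1 :=
    (hc.tendsto (x, t)).eventually (lt_mem_nhds (by simp only [hμ]; linarith))
  obtain ⟨δ, hδ, hball⟩ := Metric.eventually_nhds_iff.1 hev
  have hpos : ∀ᶠ ε in l, 0 < ε := hl self_mem_nhdsWithin
  have hsm : ∀ᶠ ε in l, ε * C < μ := by
    have : Tendsto (fun ε : ℝ => ε * C) l (𝓝 (0 * C)) :=
      ((continuous_id.mul continuous_const).tendsto (0:ℝ)).mono_left (hl.trans nhdsWithin_le_nhds)
    rw [zero_mul] at this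
    exact this.eventually (gt_mem_nhds hμ0)
  obtain ⟨ε, ⟨y, s, h1, h2, h3⟩, hε, hε2⟩ :=
    ((TA.stable (hpos.mono fun ε h => hW ε h) hlim h hδ).and (hpos.and hsm)).exists
  have a1 := hsub ε hε y s h3
  have a2 := hball (y := (y, s)) (by
    rw [Prod.dist_eq]; simp only [Real.dist_eq]; exact max_lt h1 h2)
  simp only at a2
  have a3 := (abs_le.1 (hC ε hε y)).1
  nlinarith

lemma sup_stable {l : Filter ℝ} [l.NeBot] (hl : l ≤ 𝓝[>] 0) {F f : ℝ → ℝ} {P C : ℝ}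
    (hF : Continuous F) (hf : Continuous f)
    {W : ℝ → ℝ → ℝ} {u : ℝ → ℝ} (hW : ∀ ε > 0, Continuous (W ε))
    (hC : ∀ ε > 0, ∀ x, |W ε x| ≤ C) (hlim : TendstoUniformly W u l)
    (hsup : ∀ ε > 0, ∀ x t, TB (W ε) x t → f x ≤ ε * W ε x + F (P + t)) :
    ∀ x t, TB u x t → f x ≤ F (P + t) := by
  intro x t h
  have := sub_stable (F := fun q => - F (- q)) (f := fun x => - f x) (P := -P) (C := C)
    (W := fun ε x => - W ε x) (u := fun x => - u x) hl (by fun_prop) (by fun_prop)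
    (fun ε hε => (hW ε hε).neg) (fun ε hε x => by rw [abs_neg]; exact hC ε hε x)
    (by
      rw [Metric.tendstoUniformly_iff] at hlim ⊢
      intro δ hδ
      filter_upwards [hlim δ hδ] with i hi y
      rw [dist_neg_neg]; exact hi y)
    (fun ε hε x t ht => by
      have := hsup ε hε x (-t) ht.neg
      rw [show -(-P + t) = P + -t by ring]
      linarith) x (-t) h.to_neg
  rw [show -(-P + -t) = P + t by ring] at this
  linarith

lemma ultra_limit {C Λ : ℝ} {W : ℝ → ℝ → ℝ} (U : Ultrafilter ℝ)
    (hC : ∀ᶠ ε in (U : Filter ℝ), ∀ x, |W ε x| ≤ C)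
    (hper : ∀ᶠ ε in (U : Filter ℝ), Function.Periodic (W ε) 1)
    (hΛ0 : 0 < Λ)
    (hΛ : ∀ᶠ ε in (U : Filter ℝ), ∀ x y, |W ε x - W ε y| ≤ Λ * |x - y|) :
    ∃ w : ℝ → ℝ, Continuous w ∧ Function.Periodic w 1 ∧ TendstoUniformly W w U := by
  have hex : ∀ x, ∃ y, Tendsto (fun ε => W ε x) U (𝓝 y) := by
    intro x
    obtain ⟨y, -, hy⟩ := (isCompact_Icc (a := -C) (b := C)).ultrafilter_le_nhds
      (U.map (fun ε => W ε x)) (by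
        rw [le_principal_iff]
        show ∀ᶠ ε in (U : Filter ℝ), W ε x ∈ Icc (-C) C
        filter_upwards [hC] with ε h
        exact abs_le.1 (h x))
    exact ⟨y, hy⟩
  choose w hw using hex
  have hwL : ∀ x y, |w x - w y| ≤ Λ * |x - y| := by
    intro x y
    refine le_of_tendsto ((hw x).sub (hw y)).abs ?_
    filter_upwards [hΛ] with ε h using h x y
  have hwp : Function.Periodic w 1 := by
    intro x
    refine tendsto_nhds_unique (hw (x + 1)) ((hw x).congr' ?_)
    filter_upwards [hper] with ε h using (h x).symm
  refine ⟨w, ?_, hwp, ?_⟩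
  · have : LipschitzWith Λ.toNNReal w := by
      refine LipschitzWith.of_dist_le_mul fun x y => ?_
      rw [Real.dist_eq, Real.dist_eq, Real.coe_toNNReal _ hΛ0.le]
      exact hwL x y
    exact this.continuous
  · have hloc : TendstoLocallyUniformlyOn W w U (Icc (0:ℝ) 1) := by
      rw [Metric.tendstoLocallyUniformlyOn_iff]
      intro δ hδ x hx
      refine ⟨Metric.ball x (δ / (3 * Λ)),
        mem_nhdsWithin_of_mem_nhds (Metric.ball_mem_nhds x (by positivity)), ?_⟩
      have := (hw x).eventually (Metric.ball_mem_nhds (w x) (show 0 < δ / 3 by positivity))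
      filter_upwards [hΛ, this] with ε h1 h2 y hy
      rw [Real.dist_eq] at h2
      rw [Metric.mem_ball, Real.dist_eq] at hy
      rw [Real.dist_eq]
      have b : Λ * |y - x| < δ / 3 := by
        rw [lt_div_iff₀ (by positivity)] at hy
        nlinarith
      have c1 := abs_le.1 ((h1 y x).trans b.le)
      have c2 := abs_lt.1 ((hwL y x).trans_lt b)
      have c3 := abs_lt.1 h2
      rw [abs_lt]
      constructor <;> linarith [c1.1, c1.2, c2.1, c2.2, c3.1, c3.2]
    have huni := (tendstoLocallyUniformlyOn_iff_tendstoUniformlyOn_of_compact isCompact_Icc).1 hloc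
    rw [Metric.tendstoUniformlyOn_iff] at huni
    rw [Metric.tendstoUniformly_iff]
    intro δ hδ
    filter_upwards [huni δ hδ, hper] with ε h1 h2 x
    have e1 : W ε (x - ⌊x⌋) = W ε x := by simpa using h2.sub_int_mul_eq ⌊x⌋ (x := x)
    have e2 : w (x - ⌊x⌋) = w x := by simpa using hwp.sub_int_mul_eq ⌊x⌋ (x := x)
    rw [← e1, ← e2]
    apply h1
    constructor
    · linarith [Int.floor_le x]
    · linarith [Int.lt_floor_add_one x]

lemma exp_upper {z : ℝ} (hz : |z| ≤ 1) : Real.exp z ≤ 1 + z + z ^ 2 := by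
  have := Real.abs_exp_sub_one_sub_id_le hz
  linarith [(abs_le.1 this).2]

/-- Uniform bound by comparison with a solution of the cell problem. -/
lemma disc_bound {F f w0 : ℝ → ℝ} {P M : ℝ} (hf : Continuous f)
    (hw0 : Continuous w0) (hp0 : Function.Periodic w0 1) (hM : ∀ x, |w0 x| ≤ M)
    (hA0 : ∀ x t, TA w0 x t → F (P + t) ≤ f x) (hB0 : ∀ x t, TB w0 x t → f x ≤ F (P + t))
    {v : ℝ → ℝ} {ε : ℝ} (hε : 0 < ε) (hv : Continuous v) (hpv : Function.Periodic v 1)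
    (hA : ∀ x t, TA v x t → ε * v x + F (P + t) ≤ f x)
    (hB : ∀ x t, TB v x t → f x ≤ ε * v x + F (P + t)) (x : ℝ) : |v x| ≤ 2 * M := by
  have hz : Function.Periodic (fun _ : ℝ => (0:ℝ)) 1 := fun _ => rfl
  rw [abs_le]
  constructor
  · obtain ⟨x0, hx0, X, Y, Z, S, T, hX, hY, hZ, h⟩ :=
      tripling hw0 continuous_const hv hp0 hz hpv
    have hlim : f x0 ≤ ε * v x0 + f x0 := by
      refine le_of_tendsto_of_tendsto' ((hf.tendsto x0).comp hZ)
        ((((hv.tendsto x0).comp hZ).const_mul ε).add ((hf.tendsto x0).comp hX)) fun n => ?_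
      obtain ⟨h1, h2, h3⟩ := h n
      rw [h2.zero, add_zero] at h3
      have a1 := hA0 _ _ h1
      have a2 := hB _ _ h3
      simp only [Function.comp]
      linarith
    have h0 : 0 ≤ v x0 := by
      by_contra hc
      push Not at hc
      nlinarith
    have b1 := hx0 x
    have b2 := abs_le.1 (hM x)
    have b3 := abs_le.1 (hM x0)
    linarith [b2.1, b3.2]
  · obtain ⟨x0, hx0, X, Y, Z, S, T, hX, hY, hZ, h⟩ :=
      tripling hv continuous_const hw0 hpv hz hp0
    have hlim : ε * v x0 + f x0 ≤ f x0 := by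
      refine le_of_tendsto_of_tendsto'
        ((((hv.tendsto x0).comp hX).const_mul ε).add ((hf.tendsto x0).comp hZ))
        ((hf.tendsto x0).comp hX) fun n => ?_
      obtain ⟨h1, h2, h3⟩ := h n
      rw [h2.zero, add_zero] at h3
      have a1 := hA _ _ h1
      have a2 := hB0 _ _ h3
      simp only [Function.comp]
      linarith
    have h0 : v x0 ≤ 0 := by
      by_contra hc
      push Not at hc
      nlinarith
    have b1 := hx0 x
    have b2 := abs_le.1 (hM x)
    have b3 := abs_le.1 (hM x0)
    linarith [b2.2, b3.1]

/-- The key inequality: `w` close to `W ε` forces `W η ≥ w - small` for all `η < ε`. -/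
lemma key_ineq {F f : ℝ → ℝ} {P a b K C δ : ℝ} (hf : Continuous f) (hK : 0 < K)
    (hconv : ConvexOn ℝ (Icc a b) (fun q => Real.exp (K * F q)))
    {w v z : ℝ → ℝ} {ε η : ℝ} (hη : 0 < η) (hηε : η < ε)
    (hw : Continuous w) (hpw : Function.Periodic w 1)
    (hv : Continuous v) (hpv : Function.Periodic v 1)
    (hz : Continuous z) (hpz : Function.Periodic z 1)
    (hAw : ∀ x t, TA w x t → F (P + t) ≤ f x ∧ P + t ∈ Icc a b)
    (hAv : ∀ x t, TA v x t → ε * v x + F (P + t) ≤ f x ∧ P + t ∈ Icc a b)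
    (hBz : ∀ x t, TB z x t → f x ≤ η * z x + F (P + t))
    (hC : ∀ x, |v x| ≤ C) (hε1 : K * ε * C ≤ 1) (hε2 : ε * K * C ^ 2 ≤ δ)
    (hδ : ∀ x, |w x - v x| ≤ δ) (x : ℝ) : w x - 3 * δ ≤ z x := by
  have hε : 0 < ε := hη.trans hηε
  set θ := η / ε with hθ
  have hθ0 : 0 < θ := div_pos hη hε
  have hθ1 : θ < 1 := (div_lt_one hε).2 hηε
  have hθε : θ * ε = η := by rw [hθ]; field_simp
  have hθ1' : 0 < 1 - θ := by linarith
  obtain ⟨x0, hx0, X, Y, Z, S, T, hX, hY, hZ, h⟩ :=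
    tripling (U1 := fun x => θ * v x) (U2 := fun x => (1 - θ) * w x) (W := z)
      (by fun_prop) (by fun_prop) hz (fun x => by simp only [hpv x]) (fun x => by simp only [hpw x])
      hpz
  have hlim : Real.exp (K * (f x0 - η * z x0)) ≤
      θ * Real.exp (K * (f x0 - ε * v x0)) + (1 - θ) * Real.exp (K * f x0) := by
    have c1 : Continuous (fun y => Real.exp (K * (f y - η * z y))) := by fun_prop
    have c2 : Continuous (fun y => θ * Real.exp (K * (f y - ε * v y))) := by fun_prop
    have c3 : Continuous (fun y => (1 - θ) * Real.exp (K * f y)) := by fun_prop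
    refine le_of_tendsto_of_tendsto' ((c1.tendsto x0).comp hZ)
      (((c2.tendsto x0).comp hX).add ((c3.tendsto x0).comp hY)) fun n => ?_
    obtain ⟨h1, h2, h3⟩ := h n
    obtain ⟨a1, a2⟩ := hAv _ _ (h1.scale hθ0)
    obtain ⟨b1, b2⟩ := hAw _ _ (h2.scale hθ1')
    have d1 := hBz _ _ h3
    have cv := hconv.2 a2 b2 hθ0.le hθ1'.le (by ring)
    have e : θ • (P + S n / θ) + (1 - θ) • (P + T n / (1 - θ)) = P + (S n + T n) := by
      simp only [smul_eq_mul]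
      field_simp
      ring
    rw [e] at cv
    simp only [smul_eq_mul] at cv
    simp only [Function.comp]
    have g1 : Real.exp (K * (f (Z n) - η * z (Z n))) ≤ Real.exp (K * F (P + (S n + T n))) := by
      apply Real.exp_le_exp.2
      exact mul_le_mul_of_nonneg_left (by linarith) hK.le
    have g2 : Real.exp (K * F (P + S n / θ)) ≤ Real.exp (K * (f (X n) - ε * v (X n))) := by
      apply Real.exp_le_exp.2
      exact mul_le_mul_of_nonneg_left (by linarith) hK.le
    have g3 : Real.exp (K * F (P + T n / (1 - θ))) ≤ Real.exp (K * f (Y n)) := by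
      apply Real.exp_le_exp.2
      exact mul_le_mul_of_nonneg_left (by linarith) hK.le
    have g4 := mul_le_mul_of_nonneg_left g2 hθ0.le
    have g5 := mul_le_mul_of_nonneg_left g3 hθ1'.le
    linarith
  have hC0 : 0 ≤ C := (abs_nonneg _).trans (hC 0)
  have hred : Real.exp (-(K * η * z x0)) ≤ θ * Real.exp (-(K * ε * v x0)) + (1 - θ) := by
    have e1 : Real.exp (K * (f x0 - η * z x0)) =
        Real.exp (-(K * η * z x0)) * Real.exp (K * f x0) := by
      rw [← Real.exp_add]; congr 1; ring
    have e2 : Real.exp (K * (f x0 - ε * v x0)) =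
        Real.exp (-(K * ε * v x0)) * Real.exp (K * f x0) := by
      rw [← Real.exp_add]; congr 1; ring
    rw [e1, e2] at hlim
    have hp := Real.exp_pos (K * f x0)
    refine le_of_mul_le_mul_right ?_ hp
    linarith
  have hvb : v x0 ^ 2 ≤ C ^ 2 := sq_le_sq' (abs_le.1 (hC x0)).1 (abs_le.1 (hC x0)).2
  have u1 : Real.exp (-(K * ε * v x0)) ≤ 1 + -(K * ε * v x0) + (-(K * ε * v x0)) ^ 2 := by
    apply exp_upper
    rw [abs_neg, abs_mul, abs_of_pos (by positivity : 0 < K * ε)]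
    exact (mul_le_mul_of_nonneg_left (hC x0) (by positivity)).trans hε1
  have u2 := Real.add_one_le_exp (-(K * η * z x0))
  have u3 := mul_le_mul_of_nonneg_left u1 hθ0.le
  have main : v x0 - ε * K * C ^ 2 ≤ z x0 := by
    have hKη : 0 < K * η := by positivity
    have q1 : -(K * η * z x0) ≤ θ * (-(K * ε * v x0) + (-(K * ε * v x0)) ^ 2) := by linarith
    have q2 : θ * (-(K * ε * v x0) + (-(K * ε * v x0)) ^ 2)
        = K * η * (- v x0 + ε * K * v x0 ^ 2) := by
      rw [← hθε]; ring
    rw [q2] at q1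
    have q3 : K * η * (- z x0) ≤ K * η * (- v x0 + ε * K * v x0 ^ 2) := by linarith
    have q4 := le_of_mul_le_mul_left q3 hKη
    have q5 : ε * K * v x0 ^ 2 ≤ ε * K * C ^ 2 :=
      mul_le_mul_of_nonneg_left hvb (by positivity)
    linarith
  have hx := hx0 x
  have d0 := abs_le.1 (hδ x0)
  have d1 := abs_le.1 (hδ x)
  have hδ0 : 0 ≤ δ := (abs_nonneg _).trans (hδ x)
  have r1 : (1 - θ) * (w x0 - v x0) ≤ δ := by nlinarith [d0.2]
  have r2 : θ * (w x - v x) ≤ δ := by nlinarith [d1.2]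
  nlinarith

/-- The core convergence theorem, for `exp (K F)` convex on a trapping interval. -/
theorem core {F f : ℝ → ℝ} {P a b K ρ : ℝ} (hF : Continuous F) (hf : Continuous f)
    (hK : 0 < K) (hconv : ConvexOn ℝ (Icc a b) (fun q => Real.exp (K * F q)))
    (haP : a < P) (hPb : P < b) (hρ : 0 < ρ)
    (hFa : (∀ x, f x + ρ ≤ F a) ∨ (∀ x, F a + ρ ≤ f x))
    (hFb : (∀ x, f x + ρ ≤ F b) ∨ (∀ x, F b + ρ ≤ f x))
    {w0 : ℝ → ℝ} (hw0 : Continuous w0) (hp0 : Function.Periodic w0 1)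
    (hA0 : ∀ x t, TA w0 x t → F (P + t) ≤ f x) (hB0 : ∀ x t, TB w0 x t → f x ≤ F (P + t))
    {W : ℝ → ℝ → ℝ} (hW : ∀ ε > 0, Continuous (W ε)) (hpW : ∀ ε > 0, Function.Periodic (W ε) 1)
    (hA : ∀ ε > 0, ∀ x t, TA (W ε) x t → ε * W ε x + F (P + t) ≤ f x)
    (hB : ∀ ε > 0, ∀ x t, TB (W ε) x t → f x ≤ ε * W ε x + F (P + t)) :
    ∃ u : ℝ → ℝ, Continuous u ∧ Function.Periodic u 1 ∧
      (∀ x t, TA u x t → F (P + t) ≤ f x) ∧ (∀ x t, TB u x t → f x ≤ F (P + t)) ∧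
      TendstoUniformly W u (𝓝[>] 0) := by
  obtain ⟨M, hM0, hM⟩ := per_bdd hw0 hp0
  set C := 2 * M with hCdef
  have hC : ∀ ε > 0, ∀ x, |W ε x| ≤ C := fun ε hε x =>
    disc_bound hf hw0 hp0 hM hA0 hB0 hε (hW ε hε) (hpW ε hε) (hA ε hε) (hB ε hε) x
  have hC0 : 0 ≤ C := by positivity
  -- the trapping property
  have trap : ∀ (v g : ℝ → ℝ), Continuous v → Function.Periodic v 1 →
      (∀ x t, TA v x t → F (P + t) ≤ g x) → (∀ x t, TB v x t → g x ≤ F (P + t)) →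
      (∀ x, |g x - f x| < ρ) →
      (∀ x t, TA v x t → P + t ∈ Icc a b) ∧
      ∀ x y, |v x - v y| ≤ (b - a) * |x - y| := by
    intro v g hv hpv h1 h2 hg
    have hga : (∀ x, g x < F a) ∨ (∀ x, F a < g x) := by
      rcases hFa with h | h
      · left; intro x; linarith [h x, (abs_lt.1 (hg x)).2]
      · right; intro x; linarith [h x, (abs_lt.1 (hg x)).1]
    have hgb : (∀ x, g x < F b) ∨ (∀ x, F b < g x) := by
      rcases hFb with h | h
      · left; intro x; linarith [h x, (abs_lt.1 (hg x)).2]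
      · right; intro x; linarith [h x, (abs_lt.1 (hg x)).1]
    have la := (localize hv hpv h1 h2 a hga).2.1 haP
    have lb := (localize hv hpv h1 h2 b hgb).1 hPb
    refine ⟨fun x t ht => ⟨?_, ?_⟩, ?_⟩
    · linarith [ht.le_slope la]
    · linarith [ht.slope_le lb]
    · have hle : ∀ x y, x ≤ y → |v y - v x| ≤ (b - a) * (y - x) := by
        intro x y hxy
        have e1 := la x y hxy
        have e2 := lb x y hxy
        rw [abs_le]
        constructor <;> nlinarith
      intro x y
      rcases le_total x y with h | h
      · rw [abs_sub_comm, abs_sub_comm x y, abs_of_nonneg (sub_nonneg.2 h)]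
        exact hle x y h
      · rw [abs_of_nonneg (sub_nonneg.2 h)]
        exact hle y x h
  have hsmall : ∀ c d : ℝ, 0 < d → ∀ᶠ ε in 𝓝[>] (0:ℝ), ε * c < d := by
    intro c d hd
    have : Tendsto (fun ε : ℝ => ε * c) (𝓝[>] 0) (𝓝 (0 * c)) :=
      ((continuous_id.mul continuous_const).tendsto (0:ℝ)).mono_left nhdsWithin_le_nhds
    rw [zero_mul] at this
    exact this.eventually (gt_mem_nhds hd)
  have hpos : ∀ᶠ ε in 𝓝[>] (0:ℝ), 0 < ε := self_mem_nhdsWithin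
  have trapW : ∀ ε > 0, ε * C < ρ → (∀ x t, TA (W ε) x t → P + t ∈ Icc a b) ∧
      ∀ x y, |W ε x - W ε y| ≤ (b - a) * |x - y| := by
    intro ε hε hεC
    refine trap (W ε) (fun x => f x - ε * W ε x) (hW ε hε) (hpW ε hε)
      (fun x t h => by linarith [hA ε hε x t h]) (fun x t h => by linarith [hB ε hε x t h]) ?_
    intro x
    rw [show f x - ε * W ε x - f x = -(ε * W ε x) by ring, abs_neg, abs_mul, abs_of_pos hε]
    exact (mul_le_mul_of_nonneg_left (hC ε hε x) hε.le).trans_lt hεC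
  have hlimU : ∀ U : Ultrafilter ℝ, (U : Filter ℝ) ≤ 𝓝[>] 0 → ∃ w : ℝ → ℝ, Continuous w ∧
      Function.Periodic w 1 ∧ TendstoUniformly W w U := by
    intro U hU
    refine ultra_limit (C := C) (Λ := b - a) U ?_ ?_ (by linarith) ?_
    · filter_upwards [hU hpos] with ε hε using hC ε hε
    · filter_upwards [hU hpos] with ε hε using hpW ε hε
    · filter_upwards [hU hpos, hU (hsmall C ρ hρ)] with ε hε h2 using (trapW ε hε h2).2
  -- every limit is asymptotically a lower bound
  have lower : ∀ U : Ultrafilter ℝ, (U : Filter ℝ) ≤ 𝓝[>] 0 → ∀ w : ℝ → ℝ, Continuous w →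
      Function.Periodic w 1 → TendstoUniformly W w U → ∀ δ > 0,
      ∀ᶠ η in 𝓝[>] (0:ℝ), ∀ x, w x - 3 * δ ≤ W η x := by
    intro U hU w hw hpw hlim δ hδ
    have hAw := sub_stable hU hF hf hW hC hlim hA
    have hBw := sup_stable hU hF hf hW hC hlim hB
    have htw := (trap w f hw hpw hAw hBw (fun x => by simpa using hρ)).1
    obtain ⟨ε, hε, e1, e2, e3, e4⟩ := ((hpos.filter_mono hU).and
      (((hsmall C ρ hρ).filter_mono hU).and (((hsmall (K * C) 1 one_pos).filter_mono hU).and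
      (((hsmall (K * C ^ 2) δ hδ).filter_mono hU).and
        (Metric.tendstoUniformly_iff.1 hlim δ hδ))))).exists
    have hev : ∀ᶠ η in 𝓝[>] (0:ℝ), η < ε := nhdsWithin_le_nhds (gt_mem_nhds hε)
    filter_upwards [hpos, hev] with η hη hηε x
    exact key_ineq hf hK hconv hη hηε hw hpw (hW ε hε) (hpW ε hε) (hW η hη) (hpW η hη)
      (fun x t h => ⟨hAw x t h, htw x t h⟩)
      (fun x t h => ⟨hA ε hε x t h, (trapW ε hε e1).1 x t h⟩) (hB η hη) (hC ε hε)
      (by linarith) (by linarith) (fun x => by have := e4 x; rw [Real.dist_eq] at this; exact this.le) x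
  have lower' : ∀ U U' : Ultrafilter ℝ, (U : Filter ℝ) ≤ 𝓝[>] 0 → (U' : Filter ℝ) ≤ 𝓝[>] 0 →
      ∀ w w' : ℝ → ℝ, Continuous w → Function.Periodic w 1 → TendstoUniformly W w U →
      TendstoUniformly W w' U' → ∀ x, w x ≤ w' x := by
    intro U U' hU hU' w w' hw hpw hlim hlim' x
    refine le_of_forall_pos_le_add fun δ hδ => ?_
    have h1 := hU' (lower U hU w hw hpw hlim (δ / 6) (by positivity))
    have h2 := Metric.tendstoUniformly_iff.1 hlim' (δ / 2) (by positivity)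
    obtain ⟨ε, a1, a2⟩ := (Filter.Eventually.and h1 h2).exists
    have b1 := a1 x
    have b2 := a2 x
    rw [Real.dist_eq, abs_lt] at b2
    linarith [b2.1, b2.2]
  obtain ⟨U0, hU0⟩ := Ultrafilter.exists_le (𝓝[>] (0:ℝ))
  obtain ⟨u, hu, hpu, hlim⟩ := hlimU U0 hU0
  refine ⟨u, hu, hpu, sub_stable hU0 hF hf hW hC hlim hA, sup_stable hU0 hF hf hW hC hlim hB, ?_⟩
  rw [Metric.tendstoUniformly_iff]
  intro δ hδ
  rw [Filter.Eventually, Filter.mem_iff_ultrafilter]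
  intro U hU
  obtain ⟨w, hw, hpw, hlimw⟩ := hlimU U hU
  have hwu : w = u := by
    ext x
    exact le_antisymm (lower' U U0 hU hU0 w u hw hpw hlimw hlim x)
      (lower' U0 U hU0 hU u w hu hpu hlim hlimw x)
  rw [hwu] at hlimw
  exact Metric.tendstoUniformly_iff.1 hlimw δ hδ

lemma exists_exp_convex {G : ℝ → ℝ} (hG : ContDiff ℝ 2 G) {a b : ℝ}
    (h : ∀ q ∈ Icc a b, deriv G q ≠ 0 ∨ 0 < deriv (deriv G) q) :
    ∃ K : ℝ, 0 < K ∧ ConvexOn ℝ (Icc a b) (fun q => Real.exp (K * G q)) := by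
  have hd1 : ContDiff ℝ 1 (deriv G) := by
    have : ContDiff ℝ (1 + 1) G := by simpa [one_add_one_eq_two] using hG
    exact (contDiff_succ_iff_deriv.1 this).2.2
  have hc1 : Continuous (deriv G) := hd1.continuous
  have hc2 : Continuous (deriv (deriv G)) := hd1.continuous_deriv le_rfl
  let U : ℕ → Set ℝ := fun n => {q | 0 < deriv (deriv G) q + (n + 1) * deriv G q ^ 2}
  obtain ⟨n, hn⟩ := (isCompact_Icc (a := a) (b := b)).elim_directed_cover U
    (fun n => isOpen_lt continuous_const (by fun_prop))
    (by
      intro q hq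
      rw [mem_iUnion]
      rcases h q hq with h1 | h1
      · have hp : 0 < deriv G q ^ 2 := by positivity
        obtain ⟨n, hn⟩ := exists_nat_gt (-(deriv (deriv G) q) / deriv G q ^ 2)
        refine ⟨n, ?_⟩
        rw [div_lt_iff₀ hp] at hn
        show 0 < deriv (deriv G) q + (n + 1) * deriv G q ^ 2
        linarith
      · refine ⟨0, ?_⟩
        show 0 < deriv (deriv G) q + (((0:ℕ):ℝ) + 1) * deriv G q ^ 2
        positivity)
    (by
      apply directed_of_isDirected_le
      intro m n hmn q hq
      have hq' : 0 < deriv (deriv G) q + (m + 1) * deriv G q ^ 2 := hq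
      show 0 < deriv (deriv G) q + (n + 1) * deriv G q ^ 2
      have : (m : ℝ) ≤ n := by exact_mod_cast hmn
      nlinarith [sq_nonneg (deriv G q)])
  set K : ℝ := n + 1 with hKdef
  have hK : 0 < K := by positivity
  refine ⟨K, hK, ?_⟩
  have hGd : ∀ q, HasDerivAt G (deriv G q) q := fun q =>
    (hG.differentiable two_ne_zero q).hasDerivAt
  have hGd2 : ∀ q, HasDerivAt (deriv G) (deriv (deriv G) q) q := fun q =>
    (hd1.differentiable one_ne_zero q).hasDerivAt
  have D1 : ∀ q, HasDerivAt (fun q => Real.exp (K * G q))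
      (Real.exp (K * G q) * (K * deriv G q)) q := fun q => ((hGd q).const_mul K).exp
  have hD1 : deriv (fun q => Real.exp (K * G q)) =
      fun q => Real.exp (K * G q) * (K * deriv G q) := funext fun q => (D1 q).deriv
  have D2 : ∀ q, HasDerivAt (fun q => Real.exp (K * G q) * (K * deriv G q))
      (Real.exp (K * G q) * (K * deriv G q) * (K * deriv G q) +
        Real.exp (K * G q) * (K * deriv (deriv G) q)) q :=
    fun q => (D1 q).mul ((hGd2 q).const_mul K)
  refine convexOn_of_deriv2_nonneg' (convex_Icc a b)
    (fun q _ => (D1 q).differentiableAt.differentiableWithinAt) ?_ ?_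
  · rw [hD1]
    exact fun q _ => (D2 q).differentiableAt.differentiableWithinAt
  · intro q hq
    rw [Function.iterate_succ, Function.iterate_one, Function.comp, hD1, (D2 q).deriv]
    have hq' : 0 < deriv (deriv G) q + K * deriv G q ^ 2 := hn hq
    have : Real.exp (K * G q) * (K * deriv G q) * (K * deriv G q) +
        Real.exp (K * G q) * (K * deriv (deriv G) q) =
        Real.exp (K * G q) * K * (deriv (deriv G) q + K * deriv G q ^ 2) := by ring
    rw [this]
    positivity

/-- The mirrored core theorem. -/
theorem core_neg {F f : ℝ → ℝ} {P a b K ρ : ℝ} (hF : Continuous F) (hf : Continuous f)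
    (hK : 0 < K) (hconv : ConvexOn ℝ (Icc a b) (fun q => Real.exp (K * (- F q))))
    (haP : a < P) (hPb : P < b) (hρ : 0 < ρ)
    (hFa : (∀ x, f x + ρ ≤ F a) ∨ (∀ x, F a + ρ ≤ f x))
    (hFb : (∀ x, f x + ρ ≤ F b) ∨ (∀ x, F b + ρ ≤ f x))
    {w0 : ℝ → ℝ} (hw0 : Continuous w0) (hp0 : Function.Periodic w0 1)
    (hA0 : ∀ x t, TA w0 x t → F (P + t) ≤ f x) (hB0 : ∀ x t, TB w0 x t → f x ≤ F (P + t))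
    {W : ℝ → ℝ → ℝ} (hW : ∀ ε > 0, Continuous (W ε)) (hpW : ∀ ε > 0, Function.Periodic (W ε) 1)
    (hA : ∀ ε > 0, ∀ x t, TA (W ε) x t → ε * W ε x + F (P + t) ≤ f x)
    (hB : ∀ ε > 0, ∀ x t, TB (W ε) x t → f x ≤ ε * W ε x + F (P + t)) :
    ∃ u : ℝ → ℝ, Continuous u ∧ Function.Periodic u 1 ∧
      (∀ x t, TA u x t → F (P + t) ≤ f x) ∧ (∀ x t, TB u x t → f x ≤ F (P + t)) ∧
      TendstoUniformly W u (𝓝[>] 0) := by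
  have e : ∀ t, -(-P + t) = P + -t := fun t => by ring
  obtain ⟨u, h1, h2, h3, h4, h5⟩ := core (F := fun q => - F (- q)) (f := fun x => - f x) (P := -P)
    (a := -b) (b := -a) (K := K) (ρ := ρ) (w0 := fun x => - w0 x) (W := fun ε x => - W ε x)
    (by fun_prop) (by fun_prop) hK
    (by
      refine ⟨convex_Icc _ _, ?_⟩
      intro x hx y hy s t hs ht hst
      have := hconv.2 (x := -x) ⟨by linarith [hx.2], by linarith [hx.1]⟩ (y := -y)
        ⟨by linarith [hy.2], by linarith [hy.1]⟩ hs ht hst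
      simp only [smul_eq_mul] at this ⊢
      rw [show -(s * x + t * y) = s * -x + t * -y by ring]
      exact this)
    (by linarith) (by linarith) hρ
    (by
      rcases hFb with h | h
      · right; intro x; simp only [neg_neg]; linarith [h x]
      · left; intro x; simp only [neg_neg]; linarith [h x])
    (by
      rcases hFa with h | h
      · right; intro x; simp only [neg_neg]; linarith [h x]
      · left; intro x; simp only [neg_neg]; linarith [h x])
    hw0.neg (fun x => by simp only [hp0 x])
    (fun x t ht => by have := hB0 x _ ht.neg; simp only [e]; linarith)
    (fun x t ht => by have := hA0 x _ ht.neg; simp only [e]; linarith)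
    (fun ε hε => (hW ε hε).neg) (fun ε hε x => by simp only [hpW ε hε x])
    (fun ε hε x t ht => by have := hB ε hε x _ ht.neg; simp only [e]; linarith)
    (fun ε hε x t ht => by have := hA ε hε x _ ht.neg; simp only [e]; linarith)
  refine ⟨fun x => - u x, h1.neg, fun x => by simp only [h2 x], ?_, ?_, ?_⟩
  · intro x t ht
    have := h4 x _ ht.neg
    simp only [e, neg_neg] at this
    linarith
  · intro x t ht
    have := h3 x _ ht.neg
    simp only [e, neg_neg] at this
    linarith
  · rw [Metric.tendstoUniformly_iff] at h5 ⊢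
    intro δ hδ
    filter_upwards [h5 δ hδ] with i hi y
    rw [← dist_neg_neg, neg_neg]; exact hi y

/-- Choosing the trapping interval strictly inside `(l, r)`. -/
lemma shrink {F : ℝ → ℝ} (hF : Continuous F) {α β P l r : ℝ} (hlP : l ≤ P) (hPr : P ≤ r)
    (hP : F P ∈ Icc α β) (hl : F l ∉ Icc α β) (hr : F r ∉ Icc α β) :
    ∃ a b, l < a ∧ a < P ∧ P < b ∧ b < r ∧ F a ∉ Icc α β ∧ F b ∉ Icc α β := by
  have hlP' : l < P := lt_of_le_of_ne hlP (by rintro rfl; exact hl hP)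
  have hPr' : P < r := lt_of_le_of_ne hPr (by rintro rfl; exact hr hP)
  have ho : IsOpen {q | F q ∉ Icc α β} := (isClosed_Icc.preimage hF).isOpen_compl
  have e1 : ∀ᶠ q in 𝓝[>] l, F q ∉ Icc α β := nhdsWithin_le_nhds (ho.mem_nhds hl)
  have e2 : ∀ᶠ q in 𝓝[<] r, F q ∉ Icc α β := nhdsWithin_le_nhds (ho.mem_nhds hr)
  obtain ⟨a, a1, a2⟩ := (e1.and (Ioo_mem_nhdsGT hlP')).exists
  obtain ⟨b, b1, b2⟩ := (e2.and (Ioo_mem_nhdsLT hPr')).exists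
  exact ⟨a, b, a2.1, a2.2, b2.1, b2.2, a1, b1⟩

lemma find_index (s : ℕ → ℝ) (P : ℝ) (h0 : s 0 ≤ P) :
    ∀ n : ℕ, P ≤ s (n + 1) → ∃ i, i ≤ n ∧ s i ≤ P ∧ P ≤ s (i + 1) := by
  intro n
  induction n with
  | zero => intro h; exact ⟨0, le_rfl, h0, h⟩
  | succ n ih =>
    intro h
    by_cases hc : P ≤ s (n + 1)
    · obtain ⟨i, hi, h1, h2⟩ := ih hc
      exact ⟨i, hi.trans (Nat.le_succ n), h1, h2⟩
    · exact ⟨n + 1, le_rfl, (not_le.1 hc).le, h⟩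

lemma around {F : ℝ → ℝ} {c l r : ℝ} (h1 : ∀ q, l < q → q < c → deriv F q ≠ 0)
    (h2 : ∀ q, c < q → q < r → deriv F q ≠ 0) (h3 : deriv (deriv F) c ≠ 0) :
    (∀ q, l < q → q < r → deriv F q ≠ 0 ∨ 0 < deriv (deriv F) q) ∨
      (∀ q, l < q → q < r → deriv F q ≠ 0 ∨ deriv (deriv F) q < 0) := by
  rcases lt_or_gt_of_ne h3 with h | h
  · right
    intro q hl hr
    rcases lt_trichotomy q c with hq | rfl | hq
    · exact Or.inl (h1 q hl hq)
    · exact Or.inr h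
    · exact Or.inl (h2 q hq hr)
  · left
    intro q hl hr
    rcases lt_trichotomy q c with hq | rfl | hq
    · exact Or.inl (h1 q hl hq)
    · exact Or.inr h
    · exact Or.inl (h2 q hq hr)

lemma find_interval {F : ℝ → ℝ} {α β P : ℝ} (n : ℕ) (s : ℕ → ℝ)
    (hs0 : s 0 ≤ P) (hsn : P ≤ s (n + 1))
    (hm : ∀ i, i ≤ n → s i < s (i + 1))
    (hd : ∀ i, i ≤ n → ∀ q, s i < q → q < s (i + 1) → deriv F q ≠ 0)
    (hg : ∀ i, i ≤ n → F (s i) ∈ Icc α β → F (s (i + 1)) ∉ Icc α β)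
    (hdd : ∀ i, 1 ≤ i → i ≤ n → deriv (deriv F) (s i) ≠ 0)
    (hF0 : F (s 0) ∉ Icc α β) (hFn : F (s (n + 1)) ∉ Icc α β) :
    ∃ l r, l ≤ P ∧ P ≤ r ∧ F l ∉ Icc α β ∧ F r ∉ Icc α β ∧
      ((∀ q, l < q → q < r → deriv F q ≠ 0 ∨ 0 < deriv (deriv F) q) ∨
      (∀ q, l < q → q < r → deriv F q ≠ 0 ∨ deriv (deriv F) q < 0)) := by
  obtain ⟨i, hi, h1, h2⟩ := find_index s P hs0 n hsn
  by_cases ha : F (s i) ∈ Icc α β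
  · have hi0 : i ≠ 0 := by rintro rfl; exact hF0 ha
    obtain ⟨j, rfl⟩ := Nat.exists_eq_succ_of_ne_zero hi0
    refine ⟨s j, s (j + 1 + 1), (hm j (by omega)).le.trans h1, h2,
      fun h => hg j (by omega) h ha, hg _ hi ha, ?_⟩
    exact around (hd j (by omega)) (hd (j + 1) hi) (hdd (j + 1) (by omega) hi)
  · by_cases hb : F (s (i + 1)) ∈ Icc α β
    · have hin : i ≠ n := by rintro rfl; exact hFn hb
      refine ⟨s i, s (i + 1 + 1), h1, h2.trans (hm (i + 1) (by omega)).le, ha,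
        hg (i + 1) (by omega) hb, ?_⟩
      exact around (hd i hi) (hd (i + 1) (by omega)) (hdd (i + 1) (by omega) (by omega))
    · exact ⟨s i, s (i + 1), h1, h2, ha, hb, Or.inl fun q hl hr => Or.inl (hd i hi q hl hr)⟩

theorem stmt15 (L : ℕ) (F : ℝ → ℝ) (hF : ContDiff ℝ 2 F)
    (p : ℕ → ℝ)
    -- p₁ < p₂ < ⋯ < p_{2L+1}
    (hmono : ∀ i j : ℕ, 1 ≤ i → i < j → j ≤ 2 * L + 1 → p i < p j)
    -- F(q) → +∞ as |q| → ∞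
    (hcoer : ∀ C : ℝ, ∃ R : ℝ, ∀ q : ℝ, R ≤ |q| → C ≤ F q)
    -- critical points: F'(pᵢ) = 0 and F''(pᵢ) ≠ 0 for 1 ≤ i ≤ 2L+1
    (hcrit : ∀ i : ℕ, 1 ≤ i → i ≤ 2 * L + 1 →
      deriv F (p i) = 0 ∧ deriv (deriv F) (p i) ≠ 0)
    -- F' > 0 on (p_{2i+1}, p_{2i+2}) for 0 ≤ i ≤ L (with p_{2L+2} = +∞)
    (hpos : ∀ i : ℕ, i ≤ L → ∀ q : ℝ, p (2 * i + 1) < q → (i < L → q < p (2 * i + 2)) →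
      0 < deriv F q)
    -- F' < 0 on (p_{2i}, p_{2i+1}) for 0 ≤ i ≤ L (with p₀ = -∞)
    (hneg : ∀ i : ℕ, i ≤ L → ∀ q : ℝ, (0 < i → p (2 * i) < q) → q < p (2 * i + 1) →
      deriv F q < 0)
    (V : ℝ → ℝ) (hVcont : Continuous V) (hVper : Function.Periodic V 1)
    -- osc(V) = max V - min V < m = min_{1 ≤ i ≤ 2L} |F(pᵢ) - F(p_{i+1})|
    (hosc : ∀ i : ℕ, 1 ≤ i → i ≤ 2 * L →
      sSup (Set.range V) - sInf (Set.range V) < |F (p i) - F (p (i + 1))|)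
    (P : ℝ) (Hbar : ℝ)
    (hHbar : ∃ w : ℝ → ℝ, Continuous w ∧ Function.Periodic w 1 ∧
      ViscSol1 (fun x _ q => F (P + q) - V x - Hbar) w)
    (u : ℝ → ℝ → ℝ)
    (hu : ∀ ε : ℝ, 0 < ε → Continuous (u ε) ∧ Function.Periodic (u ε) 1 ∧
      ViscSol1 (fun x r q => ε * r + F (P + q) - V x) (u ε)) :
    ∃ u0 : ℝ → ℝ, Continuous u0 ∧ Function.Periodic u0 1 ∧
      ViscSol1 (fun x _ q => F (P + q) - V x - Hbar) u0 ∧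
      TendstoUniformly (fun ε x => u ε x + Hbar / ε) u0 (𝓝[>] (0 : ℝ)) := by

  obtain ⟨w, hw, hpw, hwA, hwB⟩ := hHbar
  have hFc : Continuous F := hF.continuous
  obtain ⟨M, -, hM⟩ := per_bdd hVcont hVper
  have hbA : BddAbove (range V) := ⟨M, by rintro _ ⟨x, rfl⟩; exact (abs_le.1 (hM x)).2⟩
  have hbB : BddBelow (range V) := ⟨-M, by rintro _ ⟨x, rfl⟩; exact (abs_le.1 (hM x)).1⟩
  set α := sInf (range V) + Hbar with hα
  set β := sSup (range V) + Hbar with hβ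
  set f : ℝ → ℝ := fun x => V x + Hbar with hfdef
  have hf : Continuous f := by fun_prop
  have hfα : ∀ x, α ≤ f x := fun x => by
    have := csInf_le hbB (mem_range_self x); simp only [hα, hfdef]; linarith
  have hfβ : ∀ x, f x ≤ β := fun x => by
    have := le_csSup hbA (mem_range_self x); simp only [hβ, hfdef]; linarith
  have hsep : ∀ q, F q ∉ Icc α β → ∃ ρ > 0, (∀ x, f x + ρ ≤ F q) ∨ (∀ x, F q + ρ ≤ f x) := by
    intro q hq
    by_cases h : α ≤ F q
    · have hb : β < F q := by
        by_contra hc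
        exact hq ⟨h, not_lt.1 hc⟩
      exact ⟨F q - β, by linarith, Or.inl fun x => by linarith [hfβ x]⟩
    · exact ⟨α - F q, by linarith, Or.inr fun x => by linarith [hfα x]⟩
  have hA0 : ∀ x t, TA w x t → F (P + t) ≤ f x := by
    rintro x t ⟨φ, g1, g2, rfl⟩
    have := hwA φ g1 x g2
    simp only [hfdef]; linarith
  have hB0 : ∀ x t, TB w x t → f x ≤ F (P + t) := by
    rintro x t ⟨φ, g1, g2, rfl⟩
    have := hwB φ g1 x g2
    simp only [hfdef]; linarith
  have hFP : F P ∈ Icc α β := by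
    by_contra hc
    obtain ⟨ρ, hρ, h⟩ := hsep P hc
    refine (localize hw hpw hA0 hB0 P ?_).2.2 rfl
    rcases h with h | h
    · left; intro x; linarith [h x]
    · right; intro x; linarith [h x]
  -- the trapping interval
  have hint : ∃ l r, l ≤ P ∧ P ≤ r ∧ F l ∉ Icc α β ∧ F r ∉ Icc α β ∧
      ((∀ q, l < q → q < r → deriv F q ≠ 0 ∨ 0 < deriv (deriv F) q) ∨
      (∀ q, l < q → q < r → deriv F q ≠ 0 ∨ deriv (deriv F) q < 0)) := by
    obtain ⟨R, hR⟩ := hcoer (β + 1)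
    set A : ℝ := -(|R| + |p 1| + |P| + 1) with hAdef
    set B : ℝ := |R| + |p (2 * L + 1)| + |P| + 1 with hBdef
    have r1 := le_abs_self R
    have r2 := abs_nonneg R
    have r3 := neg_abs_le (p 1)
    have r4 := abs_nonneg (p 1)
    have r5 := neg_abs_le P
    have r6 := le_abs_self P
    have r7 := abs_nonneg (p (2 * L + 1))
    have r8 := le_abs_self (p (2 * L + 1))
    have r9 := abs_nonneg P
    have hFA : β + 1 ≤ F A := hR A (by
      rw [hAdef, abs_neg, abs_of_pos (by positivity)]; linarith)
    have hFB : β + 1 ≤ F B := hR B (by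
      rw [hBdef, abs_of_pos (by positivity)]; linarith)
    have hFA' : F A ∉ Icc α β := fun h => by linarith [h.2]
    have hFB' : F B ∉ Icc α β := fun h => by linarith [h.2]
    set s : ℕ → ℝ := fun i => if i = 0 then A else if i = 2 * L + 2 then B else p i with hs
    have s0 : s 0 = A := by simp [hs]
    have sn : s (2 * L + 1 + 1) = B := by simp [hs]
    have si : ∀ i, 1 ≤ i → i ≤ 2 * L + 1 → s i = p i := by
      intro i h1 h2
      simp only [hs]
      rw [if_neg (by omega), if_neg (by omega)]
    refine find_interval (2 * L + 1) s (by rw [s0]; linarith) (by rw [sn]; linarith)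
      ?_ ?_ ?_ ?_ (by rw [s0]; exact hFA') (by rw [sn]; exact hFB')
    · intro i hi
      rcases Nat.eq_zero_or_pos i with rfl | h0
      · rw [s0, si 1 le_rfl (by omega)]; linarith
      · rcases Nat.lt_or_ge i (2 * L + 1) with h1 | h1
        · rw [si i h0 hi, si (i + 1) (by omega) (by omega)]
          exact hmono i (i + 1) h0 (by omega) (by omega)
        · obtain rfl : i = 2 * L + 1 := by omega
          rw [sn, si _ h0 hi]; linarith
    · intro i hi q hq1 hq2
      rcases Nat.even_or_odd' i with ⟨k, rfl | rfl⟩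
      · refine (hneg k (by omega) q ?_ ?_).ne
        · intro hk
          rwa [si _ (by omega) (by omega)] at hq1
        · rwa [si _ (by omega) (by omega)] at hq2
      · refine (hpos k (by omega) q ?_ ?_).ne'
        · rwa [si _ (by omega) (by omega)] at hq1
        · intro hk
          rwa [si _ (by omega) (by omega)] at hq2
    · intro i hi h1 h2
      rcases Nat.eq_zero_or_pos i with rfl | h0
      · rw [s0] at h1; exact hFA' h1
      · rcases Nat.lt_or_ge i (2 * L + 1) with h3 | h3
        · rw [si i h0 hi] at h1
          rw [si (i + 1) (by omega) (by omega)] at h2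
          have := hosc i h0 (by omega)
          have h4 : |F (p i) - F (p (i + 1))| ≤ β - α := by
            rw [abs_le]; constructor <;> linarith [h1.1, h1.2, h2.1, h2.2]
          linarith
        · obtain rfl : i = 2 * L + 1 := by omega
          rw [sn] at h2; exact hFB' h2
    · intro i h1 h2
      rw [si i h1 h2]
      exact (hcrit i h1 h2).2
  obtain ⟨l, r, hlP, hPr, hl, hr, hcase⟩ := hint
  obtain ⟨a, b, hla, haP, hPb, hbr, hFa, hFb⟩ := shrink hFc hlP hPr hFP hl hr
  obtain ⟨ρ1, hρ1, hs1⟩ := hsep a hFa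
  obtain ⟨ρ2, hρ2, hs2⟩ := hsep b hFb
  set ρ := min ρ1 ρ2 with hρdef
  have hρ : 0 < ρ := lt_min hρ1 hρ2
  have hρle1 : ρ ≤ ρ1 := min_le_left _ _
  have hρle2 : ρ ≤ ρ2 := min_le_right _ _
  have hsa : (∀ x, f x + ρ ≤ F a) ∨ (∀ x, F a + ρ ≤ f x) := by
    rcases hs1 with h | h
    · left; intro x; linarith [h x]
    · right; intro x; linarith [h x]
  have hsb : (∀ x, f x + ρ ≤ F b) ∨ (∀ x, F b + ρ ≤ f x) := by
    rcases hs2 with h | h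
    · left; intro x; linarith [h x]
    · right; intro x; linarith [h x]
  have hWc : ∀ ε > 0, Continuous (fun x => u ε x + Hbar / ε) := fun ε hε =>
    (hu ε hε).1.add continuous_const
  have hWp : ∀ ε > 0, Function.Periodic (fun x => u ε x + Hbar / ε) 1 := fun ε hε x => by
    simp only [(hu ε hε).2.1 x]
  have hWA : ∀ ε > 0, ∀ x t, TA (fun x => u ε x + Hbar / ε) x t →
      ε * (u ε x + Hbar / ε) + F (P + t) ≤ f x := by
    intro ε hε x t ht
    obtain ⟨φ, g1, g2, rfl⟩ := ht.add_const
    have := (hu ε hε).2.2.1 φ g1 x g2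
    have e : ε * (u ε x + Hbar / ε) = ε * u ε x + Hbar := by field_simp
    rw [e]
    simp only [hfdef]; linarith
  have hWB : ∀ ε > 0, ∀ x t, TB (fun x => u ε x + Hbar / ε) x t →
      f x ≤ ε * (u ε x + Hbar / ε) + F (P + t) := by
    intro ε hε x t ht
    obtain ⟨φ, g1, g2, rfl⟩ := ht.add_const
    have := (hu ε hε).2.2.2 φ g1 x g2
    have e : ε * (u ε x + Hbar / ε) = ε * u ε x + Hbar := by field_simp
    rw [e]
    simp only [hfdef]; linarith
  have hcore : ∃ u0 : ℝ → ℝ, Continuous u0 ∧ Function.Periodic u0 1 ∧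
      (∀ x t, TA u0 x t → F (P + t) ≤ f x) ∧ (∀ x t, TB u0 x t → f x ≤ F (P + t)) ∧
      TendstoUniformly (fun ε x => u ε x + Hbar / ε) u0 (𝓝[>] 0) := by
    rcases hcase with hc | hc
    · obtain ⟨K, hK, hconv⟩ := exists_exp_convex (a := a) (b := b) hF
        (fun q hq => hc q (hla.trans_le hq.1) (hq.2.trans_lt hbr))
      exact core hFc hf hK hconv haP hPb hρ hsa hsb hw hpw hA0 hB0 hWc hWp hWA hWB
    · have hd : deriv (fun q => - F q) = fun q => - deriv F q := by
        ext q; simp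
      obtain ⟨K, hK, hconv⟩ := exists_exp_convex (G := fun q => - F q) (a := a) (b := b) hF.neg
        (fun q hq => by
          rw [hd]
          rcases hc q (hla.trans_le hq.1) (hq.2.trans_lt hbr) with h | h
          · left; simpa using h
          · right; simpa using h)
      exact core_neg hFc hf hK hconv haP hPb hρ hsa hsb hw hpw hA0 hB0 hWc hWp hWA hWB
  obtain ⟨u0, h1, h2, h3, h4, h5⟩ := hcore
  refine ⟨u0, h1, h2, ⟨?_, ?_⟩, h5⟩
  · intro φ g1 x g2
    have := h3 x _ ⟨φ, g1, g2, rfl⟩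
    simp only [hfdef] at this
    linarith
  · intro φ g1 x g2
    have := h4 x _ ⟨φ, g1, g2, rfl⟩
    simp only [hfdef] at this
    linarith
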